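/- Let G be a finite group, p a prime, S a Sylow p-subgroup of G, and suppose every element of G of order p, and every element of order 4 when p = 2, lies in Z(G). Then G is p-nilpotent. -/

import Mathlib

open scoped commutatorElement Pointwise

theorem mul_pow_of_commutator_commute {G : Type*} [Group G] {u w c : G} (h : w * u = u * w * c)
    (hu : Commute c u) (hw : Commute c w) (n : ℕ) :
    (u * w) ^ n = u ^ n * w ^ n * c ^ n.choose 2 := by
  have key : ∀ m : ℕ, w ^ m * u = u * w ^ m * c ^ m := by
    intro m
    induction m with
    | zero => simp
    | succ m ih =>
      calc w ^ (m + 1) * u = w ^ m * (w * u) := by rw [pow_succ, mul_assoc]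
        _ = w ^ m * u * w * c := by rw [h]; group
        _ = u * w ^ m * (c ^ m * w) * c := by rw [ih]; group
        _ = u * w ^ (m + 1) * c ^ (m + 1) := by
          rw [(hw.pow_left m).eq, pow_succ w, pow_succ c]; simp only [mul_assoc]
  induction n with
  | zero => simp
  | succ n ih =>
    have hcw : Commute (c ^ n.choose 2) (u * w) := ((hu.mul_right hw).pow_left _)
    calc (u * w) ^ (n + 1) = u ^ n * w ^ n * (c ^ n.choose 2 * (u * w)) := by
          rw [pow_succ, ih, mul_assoc]
      _ = u ^ n * (w ^ n * u) * w * c ^ n.choose 2 := by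
          rw [hcw.eq]; simp only [mul_assoc]
      _ = u ^ n * u * w ^ n * (c ^ n * w) * c ^ n.choose 2 := by
          rw [key]; simp only [mul_assoc]
      _ = u ^ (n + 1) * w ^ (n + 1) * c ^ (n + 1).choose 2 := by
          rw [(hw.pow_left n).eq, Nat.choose_succ_succ' n 1, Nat.choose_one_right, pow_add c,
            pow_succ u, pow_succ w]
          simp only [mul_assoc]

theorem commute_of_commute_commutator {G : Type*} [Group G] {x u : G}
    (hw : Commute x (u⁻¹ * (x * u * x⁻¹)))
    (hx : (orderOf x).Coprime (orderOf (u⁻¹ * (x * u * x⁻¹)))) : Commute x u := by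
  set w := u⁻¹ * (x * u * x⁻¹) with hwdef
  have key : ∀ n : ℕ, x ^ n * u = u * w ^ n * x ^ n := by
    intro n
    induction n with
    | zero => simp
    | succ n ih =>
      have hxu : x * u = u * w * x := by rw [hwdef]; group
      calc x ^ (n + 1) * u = x * (x ^ n * u) := by rw [pow_succ', mul_assoc]
        _ = x * u * w ^ n * x ^ n := by rw [ih]; simp only [mul_assoc]
        _ = u * w * (x * w ^ n) * x ^ n := by rw [hxu]; simp only [mul_assoc]
        _ = u * w ^ (n + 1) * x ^ (n + 1) := by
          rw [(hw.pow_right n).eq, pow_succ' w, pow_succ' x]; simp only [mul_assoc]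
  have h1 : w ^ orderOf x = 1 := by
    have := key (orderOf x)
    simpa [pow_orderOf_eq_one] using this
  have h2 : orderOf w = 1 := Nat.eq_one_of_dvd_coprimes hx (orderOf_dvd_of_pow_eq_one h1) dvd_rfl
  have h3 : w = 1 := orderOf_eq_one_iff.mp h2
  have h4 := key 1
  rw [h3] at h4
  simpa [commute_iff_eq] using h4

theorem IsPGroup.exists_normal_index_eq {G : Type*} [Group G] [Finite G] [Nontrivial G] {p : ℕ}
    [hp : Fact p.Prime] (hG : IsPGroup p G) : ∃ K : Subgroup G, K.Normal ∧ K.index = p := by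
  obtain ⟨n, hn, hcard⟩ := hG.nontrivial_iff_card.mp ‹_›
  obtain ⟨m, rfl⟩ := Nat.exists_eq_succ_of_ne_zero hn.ne'
  obtain ⟨K, hK⟩ := Sylow.exists_subgroup_card_pow_prime (G := G) p (n := m)
    (hcard ▸ pow_dvd_pow p (Nat.le_succ m))
  have hidx : K.index = p := by
    have := K.card_mul_index
    rw [hK, hcard, Nat.succ_eq_add_one, pow_succ] at this
    exact Nat.eq_of_mul_eq_mul_left (pow_pos hp.out.pos m) this
  refine ⟨K, Subgroup.normal_of_index_eq_minFac_card ?_, hidx⟩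
  rw [hidx, hcard, Nat.Prime.pow_minFac hp.out (Nat.succ_ne_zero m)]

/-- The subgroup generated by the commutators and the `p`-th powers of elements of `Q`. -/
def Subgroup.commutatorPow {G : Type*} [Group G] (p : ℕ) (Q : Subgroup G) : Subgroup G :=
  closure {g | (∃ u ∈ Q, ∃ v ∈ Q, ⁅u, v⁆ = g) ∨ ∃ u ∈ Q, u ^ p = g}

namespace Subgroup

theorem commutatorElement_mem_commutatorPow {G : Type*} [Group G] (p : ℕ) {Q : Subgroup G} {u v : G}
    (hu : u ∈ Q) (hv : v ∈ Q) : ⁅u, v⁆ ∈ Q.commutatorPow p :=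
  subset_closure (Or.inl ⟨u, hu, v, hv, rfl⟩)

theorem pow_mem_commutatorPow {G : Type*} [Group G] (p : ℕ) {Q : Subgroup G} {u : G}
    (hu : u ∈ Q) : u ^ p ∈ Q.commutatorPow p :=
  subset_closure (Or.inr ⟨u, hu, rfl⟩)

theorem conj_mem_commutatorPow {G : Type*} [Group G] {p : ℕ} {Q : Subgroup G} {x m : G}
    (hx : ∀ u ∈ Q, x * u * x⁻¹ ∈ Q) (hm : m ∈ Q.commutatorPow p) :
    x * m * x⁻¹ ∈ Q.commutatorPow p := by
  have h : Q.commutatorPow p ≤ (Q.commutatorPow p).comap (MulAut.conj x).toMonoidHom := by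
    refine (closure_le _).mpr ?_
    rintro _ (⟨u, hu, v, hv, rfl⟩ | ⟨u, hu, rfl⟩)
    · have := commutatorElement_mem_commutatorPow p (hx u hu) (hx v hv)
      simpa [commutatorElement_def, mul_assoc] using this
    · have := pow_mem_commutatorPow p (hx u hu)
      simpa [conj_pow] using this
  simpa using h hm

theorem commutatorPow_lt {G : Type*} [Group G] [Finite G] {p : ℕ} [hp : Fact p.Prime]
    {Q : Subgroup G} (hQ : IsPGroup p Q) (hne : Q ≠ ⊥) : Q.commutatorPow p < Q := by
  have := (Q.nontrivial_iff_ne_bot).mpr hne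
  obtain ⟨K, hK, hKp⟩ := hQ.exists_normal_index_eq
  have hcard : Nat.card (Q ⧸ K) = p := hKp
  have hcomm := (isCyclic_of_prime_card hcard).isMulCommutative
  have hle : Q.commutatorPow p ≤ K.map Q.subtype := by
    refine (closure_le _).mpr ?_
    rintro _ (⟨u, hu, v, hv, rfl⟩ | ⟨u, hu, rfl⟩)
    · refine ⟨⁅(⟨u, hu⟩ : Q), ⟨v, hv⟩⁆, ?_, rfl⟩
      exact Normal.quotient_commutative_iff_commutator_le.mp hcomm
        (commutator_mem_commutator (mem_top _) (mem_top _))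
    · refine ⟨(⟨u, hu⟩ : Q) ^ p, ?_, rfl⟩
      rw [← hKp]
      exact K.pow_index_mem _
  have hlt : K.map Q.subtype < Q := by
    refine lt_of_le_of_ne (map_subtype_le K) fun h => ?_
    have hK1 : K = ⊤ := by
      rw [eq_top_iff]
      rintro ⟨u, hu⟩ -
      obtain ⟨v, hv, hvu⟩ : u ∈ K.map Q.subtype := h.symm ▸ hu
      rwa [← show v = ⟨u, hu⟩ from Subtype.ext hvu]
    rw [hK1, index_top] at hKp
    exact hp.out.one_lt.ne hKp
  exact hle.trans_lt hlt

end Subgroup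

theorem commute_of_isPGroup_of_coprime {G : Type*} [Group G] [Finite G] {p q : ℕ}
    [hp : Fact p.Prime] (hpq : p ∣ q) (hpq' : p ∣ q.choose 2) {x : G} (hx : p.Coprime (orderOf x))
    (hxq : ∀ w : G, w ^ q = 1 → Commute x w) (Q : Subgroup G) (hQ : IsPGroup p Q)
    (hxQ : ∀ u ∈ Q, x * u * x⁻¹ ∈ Q) : ∀ u ∈ Q, Commute x u := by
  induction Q using WellFoundedLT.induction with
  | ind Q ih =>
  rcases eq_or_ne Q ⊥ with rfl | hne
  · rintro u hu
    rw [Subgroup.mem_bot.mp hu]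
    exact Commute.one_right x
  set M := Q.commutatorPow p with hM
  have hMQ : M < Q := Subgroup.commutatorPow_lt hQ hne
  have hxM : ∀ m ∈ M, Commute x m := ih M hMQ (hQ.to_le hMQ.le) fun m hm =>
    Subgroup.conj_mem_commutatorPow hxQ hm
  have hwQ : ∀ u ∈ Q, u⁻¹ * (x * u * x⁻¹) ∈ Q := fun u hu =>
    Q.mul_mem (Q.inv_mem hu) (hxQ u hu)
  have hwM : ∀ u ∈ Q, ∀ m ∈ M, Commute m (u⁻¹ * (x * u * x⁻¹)) := by
    intro u hu m hm
    have h1 : x * (u * m * u⁻¹) = u * m * u⁻¹ * x :=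
      hxM _ (Subgroup.conj_mem_commutatorPow
        (fun v hv => Q.mul_mem (Q.mul_mem hu hv) (Q.inv_mem hu)) hm)
    have h2 : x⁻¹ * m = m * x⁻¹ := (hxM m hm).inv_left.eq
    calc m * (u⁻¹ * (x * u * x⁻¹)) = u⁻¹ * (u * m * u⁻¹ * x) * u * x⁻¹ := by group
      _ = u⁻¹ * x * u * (m * x⁻¹) := by rw [← h1]; group
      _ = u⁻¹ * (x * u * x⁻¹) * m := by rw [← h2]; group
  have hfix : ∀ u ∈ Q, Commute x (u⁻¹ * (x * u * x⁻¹)) := by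
    intro u hu
    by_cases hD : Q ⊓ Subgroup.centralizer M = Q
    · have hcen : ∀ m ∈ M, ∀ v ∈ Q, Commute m v := fun m hm v hv =>
        Subgroup.mem_centralizer_iff.mp (inf_eq_left.mp hD hv) m hm
      refine hxq _ ?_
      set w := u⁻¹ * (x * u * x⁻¹) with hw
      have hwmem : w ∈ Q := hwQ u hu
      have hcM : ⁅w⁻¹, u⁻¹⁆ ∈ M :=
        Subgroup.commutatorElement_mem_commutatorPow p (Q.inv_mem hwmem) (Q.inv_mem hu)
      have hcp : ∀ a ∈ Q, ∀ b ∈ Q, ⁅a, b⁆ ^ p = 1 := by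
        intro a ha b hb
        have h1 : Commute (⁅a, b⁆ * b) ⁅a, b⁆ := by
          have := hcen _ (Subgroup.commutatorElement_mem_commutatorPow p ha hb) b hb
          exact (Commute.refl _).mul_left this.symm
        have h2 : a * b * a⁻¹ = ⁅a, b⁆ * b := by rw [commutatorElement_def]; group
        have h3 : (a * b * a⁻¹) ^ p = b ^ p := by
          rw [conj_pow, ← (hcen _ (Subgroup.pow_mem_commutatorPow p hb) a ha).eq]; group
        rw [h2, (hcen _ (Subgroup.commutatorElement_mem_commutatorPow p ha hb) b hb).mul_pow] at h3
        simpa using h3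
      have hpow := mul_pow_of_commutator_commute (u := u) (w := w) (c := ⁅w⁻¹, u⁻¹⁆)
        (by rw [commutatorElement_def]; group) (hcen _ hcM u hu) (hcen _ hcM w hwmem) q
      have hc1 : ⁅w⁻¹, u⁻¹⁆ ^ q.choose 2 = 1 := by
        obtain ⟨k, hk⟩ := hpq'
        rw [hk, pow_mul, hcp _ (Q.inv_mem hwmem) _ (Q.inv_mem hu), one_pow]
      have huw : u * w = x * u * x⁻¹ := by rw [hw]; group
      have huq : Commute x (u ^ q) := by
        obtain ⟨k, hk⟩ := hpq
        rw [hk, pow_mul]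
        exact (hxM _ (Subgroup.pow_mem_commutatorPow p hu)).pow_right k
      rw [hc1, mul_one, huw, conj_pow, huq.eq, mul_inv_cancel_right] at hpow
      simpa using hpow
    · have hlt : Q ⊓ Subgroup.centralizer M < Q := lt_of_le_of_ne inf_le_left hD
      refine ih _ hlt (hQ.to_le hlt.le) ?_ _
        ⟨hwQ u hu, Subgroup.mem_centralizer_iff.mpr fun m hm => hwM u hu m hm⟩
      rintro c ⟨hcQ, hcM⟩
      refine ⟨hxQ c hcQ, Subgroup.mem_centralizer_iff.mpr fun m hm => ?_⟩
      have hmx : Commute m x := (hxM m hm).symm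
      exact (hmx.mul_right (Subgroup.mem_centralizer_iff.mp hcM m hm)).mul_right hmx.inv_right
  intro u hu
  refine commute_of_commute_commutator (hfix u hu) ?_
  obtain ⟨k, hk⟩ := (isPGroup_iff_orderOf_dvd_pow.mp hQ) ⟨_, hwQ u hu⟩
  rw [Subgroup.orderOf_mk] at hk
  exact (Nat.Coprime.coprime_dvd_left hk (hx.pow_left k)).symm

theorem exists_coprime_orderOf_pow {G : Type*} [Group G] [Finite G] {p : ℕ} [hp : Fact p.Prime]
    (g : G) : ∃ k : ℕ, p.Coprime (orderOf (g ^ p ^ k)) := by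
  have h0 : orderOf g ≠ 0 := (orderOf_pos g).ne'
  refine ⟨(orderOf g).factorization p, ?_⟩
  rw [orderOf_pow_of_dvd (pow_ne_zero _ hp.out.ne_zero) (Nat.ordProj_dvd _ _)]
  exact Nat.coprime_ordCompl hp.out h0

theorem exists_index_eq_pow_of_coprime_mem {G : Type*} [Group G] [Finite G] {p : ℕ}
    [hp : Fact p.Prime] (C : Subgroup G) [C.Normal]
    (hC : ∀ g : G, p.Coprime (orderOf g) → g ∈ C) : ∃ n, C.index = p ^ n := by
  have hquot : IsPGroup p (G ⧸ C) := by
    refine isPGroup_iff_pow_pow_eq_one.mpr fun g => ?_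
    induction g using QuotientGroup.induction_on with
    | H g =>
      obtain ⟨k, hk⟩ := exists_coprime_orderOf_pow (p := p) g
      exact ⟨k, (QuotientGroup.eq_one_iff (g ^ p ^ k)).mpr (hC _ hk)⟩
  exact IsPGroup.iff_card.mp hquot

theorem Sylow.sup_eq_top_of_coprime_mem {G : Type*} [Group G] [Finite G] {p : ℕ}
    [hp : Fact p.Prime] (S : Sylow p G) (C : Subgroup G) [C.Normal]
    (hC : ∀ g : G, p.Coprime (orderOf g) → g ∈ C) : C ⊔ S = ⊤ := by
  obtain ⟨n, hn⟩ := exists_index_eq_pow_of_coprime_mem C hC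
  rw [← Subgroup.index_eq_one]
  have h1 : (C ⊔ S).index ∣ p ^ n := hn ▸ Subgroup.index_dvd_of_le le_sup_left
  have h2 : (C ⊔ S).index ∣ (S : Subgroup G).index := Subgroup.index_dvd_of_le le_sup_right
  exact Nat.eq_one_of_dvd_coprimes
    (((Nat.Prime.coprime_iff_not_dvd hp.out).mpr S.not_dvd_index).pow_left n) h1 h2

theorem Sylow.exists_mem_smul_eq {G : Type*} [Group G] [Finite G] {p : ℕ}
    [hp : Fact p.Prime] (S T : Sylow p G) (C : Subgroup G) [C.Normal]
    (hC : ∀ g : G, p.Coprime (orderOf g) → g ∈ C) : ∃ c ∈ C, c • S = T := by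
  obtain ⟨g, rfl⟩ := MulAction.exists_smul_eq G S T
  obtain ⟨c, hc, s, hs, rfl⟩ := Subgroup.mem_sup_of_normal_left.mp
    (S.sup_eq_top_of_coprime_mem C hC ▸ Subgroup.mem_top g)
  refine ⟨c, hc, ?_⟩
  rw [mul_smul, Sylow.smul_eq_iff_mem_normalizer.mpr (Subgroup.le_normalizer hs)]

theorem Sylow.mem_smul_iff {G : Type*} [Group G] {p : ℕ} {g x : G} {P : Sylow p G} :
    x ∈ g • P ↔ g⁻¹ * x * g ∈ P := by
  change x ∈ ((g • P : Sylow p G) : Subgroup G) ↔ g⁻¹ * x * g ∈ (P : Subgroup G)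
  rw [Sylow.coe_subgroup_smul, Subgroup.mem_pointwise_smul_iff_inv_smul_mem]
  simp [MulAut.smul_def, ← map_inv]

theorem IsPGroup.lt_inf_normalizer {G : Type*} [Group G] [Finite G] {p : ℕ}
    [hp : Fact p.Prime] {D P : Subgroup G} (hP : IsPGroup p P) (h : D < P) :
    D < P ⊓ Subgroup.normalizer (D : Set G) := by
  refine lt_of_le_of_ne (le_inf h.le Subgroup.le_normalizer) fun heq => ?_
  have := hP.isNilpotent
  have hlt : D.subgroupOf P < ⊤ :=
    lt_top_iff_ne_top.mpr fun ht => h.not_ge (Subgroup.subgroupOf_eq_top.mp ht)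
  refine (Group.normalizerCondition_of_isNilpotent _ hlt).ne ?_
  rw [← Subgroup.subgroupOf_normalizer_eq h.le]
  conv_lhs => rw [heq]
  exact Subgroup.inf_subgroupOf_left _ _

/-- If every `p`-subgroup is centralized by the `p'`-elements of its normalizer, then two Sylow
`p`-subgroups are conjugate under the centralizer of their intersection. -/
theorem Sylow.exists_mem_centralizer_inf_smul_eq {G : Type*} [Group G] [Finite G] {p : ℕ}
    [hp : Fact p.Prime]
    (H : ∀ D : Subgroup G, IsPGroup p D → ∀ x ∈ Subgroup.normalizer (D : Set G),
      p.Coprime (orderOf x) → x ∈ Subgroup.centralizer (D : Set G)) (P Q : Sylow p G) :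
    ∃ c ∈ Subgroup.centralizer ((P ⊓ Q : Subgroup G) : Set G), c • P = Q := by
  generalize hD : (P ⊓ Q : Subgroup G) = D
  induction D using WellFoundedGT.induction generalizing P Q with
  | ind D ih =>
  by_cases hPQ : P = Q
  · exact ⟨1, one_mem _, by simp [hPQ]⟩
  have hDP : D < P := by
    refine lt_of_le_of_ne (hD ▸ inf_le_left) fun h => hPQ (Sylow.ext ?_)
    exact (P.3 Q.2 (inf_eq_left.mp (hD.trans h))).symm
  have hDQ : D < Q := by
    refine lt_of_le_of_ne (hD ▸ inf_le_right) fun h => hPQ (Sylow.ext ?_)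
    exact Q.3 P.2 (inf_eq_right.mp (hD.trans h))
  have hDp : IsPGroup p D := P.2.to_le hDP.le
  set N := Subgroup.normalizer (D : Set G) with hN
  have hPN := P.2.lt_inf_normalizer hDP
  have hQN := Q.2.lt_inf_normalizer hDQ
  obtain ⟨S, hS⟩ := (P.2.comap_subtype (K := N)).exists_le_sylow
  obtain ⟨T, hT⟩ := (Q.2.comap_subtype (K := N)).exists_le_sylow
  obtain ⟨R, hR⟩ := (S.2.map N.subtype).exists_le_sylow
  have hCn : ((Subgroup.centralizer (D : Set G)).subgroupOf N).Normal := inferInstance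
  obtain ⟨c, hc, hcS⟩ := S.exists_mem_smul_eq T ((Subgroup.centralizer (D : Set G)).subgroupOf N)
    fun g hg => H D hDp g g.2 (by rwa [Subgroup.orderOf_coe])
  have hPR : D < (P ⊓ R : Subgroup G) := hPN.trans_le <| le_inf inf_le_left <| by
    rintro y ⟨hyP, hyN⟩
    exact hR ⟨⟨y, hyN⟩, hS hyP, rfl⟩
  have hRQ : D < (((c : G) • R : Sylow p G) : Subgroup G) ⊓ Q := hQN.trans_le <| le_inf (by
    rintro y ⟨hyQ, hyN⟩
    have hyT : (⟨y, hyN⟩ : N) ∈ c • S := hcS ▸ hT hyQ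
    exact Sylow.mem_smul_iff.mpr (hR ⟨_, Sylow.mem_smul_iff.mp hyT, rfl⟩)) inf_le_left
  obtain ⟨a, ha, haP⟩ := ih _ hPR P R rfl
  obtain ⟨b, hb, hbR⟩ := ih _ hRQ (c • R) Q rfl
  refine ⟨b * (c * a), mul_mem (Subgroup.centralizer_le hRQ.le hb)
    (mul_mem hc (Subgroup.centralizer_le hPR.le ha)), ?_⟩
  rw [mul_smul, mul_smul, haP, ← hbR]
  rfl

/-- If every `p`-subgroup is centralized by the `p'`-elements of its normalizer, then a Sylow
`p`-subgroup controls its own fusion. -/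
theorem Sylow.exists_mem_conj_eq {G : Type*} [Group G] [Finite G] {p : ℕ}
    [hp : Fact p.Prime]
    (H : ∀ D : Subgroup G, IsPGroup p D → ∀ x ∈ Subgroup.normalizer (D : Set G),
      p.Coprime (orderOf x) → x ∈ Subgroup.centralizer (D : Set G)) (S : Sylow p G) {x g : G}
    (hx : x ∈ S) (hg : g * x * g⁻¹ ∈ S) : ∃ s ∈ S, g * x * g⁻¹ = s * x * s⁻¹ := by
  obtain ⟨c, hc, hcS⟩ := Sylow.exists_mem_centralizer_inf_smul_eq H (g • S) S
  have hcx : Commute (g * x * g⁻¹) c := Subgroup.mem_centralizer_iff.mp hc _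
    ⟨Sylow.mem_smul_iff.mpr (by simpa [mul_assoc] using hx), hg⟩
  rw [← mul_smul, Sylow.smul_eq_iff_mem_normalizer] at hcS
  set N := Subgroup.normalizer ((S : Subgroup G) : Set G) with hN
  have hSN : (S : Subgroup G) ≤ N := Subgroup.le_normalizer
  have htop := (S.subtype hSN).sup_eq_top_of_coprime_mem
    ((Subgroup.centralizer ((S : Subgroup G) : Set G)).subgroupOf N)
    fun y hy => H S S.2 y y.2 (by rwa [Subgroup.orderOf_coe])
  rw [sup_comm] at htop
  obtain ⟨s, hs, t, ht, hst⟩ := Subgroup.mem_sup_of_normal_right.mp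
    (htop ▸ Subgroup.mem_top (⟨c * g, hcS⟩ : N))
  have hst' : (s : G) * t = c * g := congrArg Subtype.val hst
  have htx : x * t = t * x := Subgroup.mem_centralizer_iff.mp ht x hx
  refine ⟨s, hs, ?_⟩
  calc g * x * g⁻¹ = c * (g * x * g⁻¹) * c⁻¹ := by rw [← hcx.eq]; group
    _ = (c * g) * x * (c * g)⁻¹ := by group
    _ = s * (t * x) * (t : G)⁻¹ * (s : G)⁻¹ := by rw [← hst']; group
    _ = s * x * (s : G)⁻¹ := by rw [← htx]; group

open scoped IsMulCommutative in
/-- If every `p`-subgroup is centralized by the `p'`-elements of its normalizer and `p` divides the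
order of `G`, then `G` has a proper subgroup containing all `p'`-elements. -/
theorem exists_lt_top_coprime_mem {G : Type*} [Group G] [Finite G] {p : ℕ}
    [hp : Fact p.Prime]
    (H : ∀ D : Subgroup G, IsPGroup p D → ∀ x ∈ Subgroup.normalizer (D : Set G),
      p.Coprime (orderOf x) → x ∈ Subgroup.centralizer (D : Set G)) (hdvd : p ∣ Nat.card G) :
    ∃ N : Subgroup G, N < ⊤ ∧ ∀ g : G, p.Coprime (orderOf g) → g ∈ N := by
  let S : Sylow p G := default
  refine ⟨S.transferFocal.ker, lt_top_iff_ne_top.mpr fun htop => ?_, fun g hg => ?_⟩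
  · have hne : (S : Subgroup G) ≠ ⊥ := S.ne_bot_of_dvd_card hdvd
    have hfoc := Subgroup.ker_transferFocal_inf_eq_focalSubgroup S
    rw [htop, top_inf_eq] at hfoc
    refine (Subgroup.commutatorPow_lt S.2 hne).not_ge ?_
    conv_lhs => rw [hfoc]
    refine (Subgroup.closure_le _).mpr ?_
    rintro _ ⟨hgS, x, hx, u, rfl⟩
    have hux : u * x⁻¹ * u⁻¹ ∈ (S : Subgroup G) := by
      have := mul_mem (inv_mem hx) hgS
      rw [commutatorElement_def] at this
      convert this using 1
      group
    obtain ⟨s, hs, hsx⟩ := S.exists_mem_conj_eq H (inv_mem hx) hux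
    have heq : ⁅x, u⁆ = ⁅x, s⁆ := by
      calc ⁅x, u⁆ = x * (u * x⁻¹ * u⁻¹) := by rw [commutatorElement_def]; group
        _ = ⁅x, s⁆ := by rw [hsx, commutatorElement_def]; group
    rw [heq]
    exact Subgroup.commutatorElement_mem_commutatorPow p hx hs
  · rw [MonoidHom.mem_ker, ← orderOf_eq_one_iff]
    obtain ⟨k, hk⟩ := isPGroup_iff_orderOf_dvd_pow.mp
      (S.2.to_quotient (S : Subgroup G).focalSubgroupOf) (S.transferFocal g)
    exact Nat.eq_one_of_dvd_coprimes (hg.pow_left k) hk (orderOf_map_dvd _ g)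

/-- **Frobenius' normal `p`-complement theorem**, in the form: if every `p`-subgroup is centralized
by the `p'`-elements of its normalizer, then the `p'`-elements form a subgroup. -/
theorem exists_subgroup_mem_iff_coprime_orderOf {G : Type*} [Group G] [Finite G] {p : ℕ}
    [hp : Fact p.Prime]
    (H : ∀ D : Subgroup G, IsPGroup p D → ∀ x ∈ Subgroup.normalizer (D : Set G),
      p.Coprime (orderOf x) → x ∈ Subgroup.centralizer (D : Set G)) :
    ∃ K : Subgroup G, ∀ g : G, g ∈ K ↔ p.Coprime (orderOf g) := by
  suffices h : ∀ L : Subgroup G, (∀ g : G, p.Coprime (orderOf g) → g ∈ L) →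
      ∃ K : Subgroup G, ∀ g : G, g ∈ K ↔ p.Coprime (orderOf g) from
    h ⊤ fun g _ => Subgroup.mem_top g
  intro L
  induction L using WellFoundedLT.induction with
  | ind L ih =>
  intro hL
  by_cases hdvd : p ∣ Nat.card L
  · obtain ⟨N, hNlt, hN⟩ := exists_lt_top_coprime_mem (G := L) (p := p)
      (fun D hD x hx hxp => by
        have h1 := H (D.map L.subtype) (hD.map _) x
          (Subgroup.le_normalizer_map _ (Subgroup.mem_map_of_mem _ hx))
          (by rwa [Subgroup.orderOf_coe])
        refine Subgroup.mem_centralizer_iff.mpr fun d hd => Subtype.ext ?_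
        exact Subgroup.mem_centralizer_iff.mp h1 d (Subgroup.mem_map_of_mem _ hd)) hdvd
    refine ih (N.map L.subtype) (lt_of_le_of_ne (Subgroup.map_subtype_le N) fun h => hNlt.ne ?_)
      fun g hg => ⟨⟨g, hL g hg⟩, hN _ (by rwa [Subgroup.orderOf_mk]), rfl⟩
    exact Subgroup.map_injective L.subtype_injective (by
      rw [h, ← MonoidHom.range_eq_map, Subgroup.range_subtype])
  · refine ⟨L, fun g => ⟨fun hg => ?_, hL g⟩⟩
    refine ((Nat.Prime.coprime_iff_not_dvd hp.out).mpr fun h => hdvd ?_)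
    exact h.trans (Subgroup.orderOf_dvd_natCard L hg)

/-- Itô's theorem: if every element of order `p` (and of order `4` when `p = 2`)
is central, then `G` is `p`-nilpotent, i.e. has a normal `p`-complement. -/
theorem stmt_16 {G : Type*} [Group G] [Finite G] (p : ℕ) (hp : p.Prime)
    (S : Sylow p G)
    (hP : ∀ g : G, orderOf g = p → g ∈ Subgroup.center G)
    (h4 : p = 2 → ∀ g : G, orderOf g = 4 → g ∈ Subgroup.center G) :
    ∃ N : Subgroup G, N.Normal ∧ N.IsComplement' (S : Subgroup G) := by
  have : Fact p.Prime := ⟨hp⟩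
  obtain ⟨q, hpq, hpq', hq⟩ : ∃ q, p ∣ q ∧ p ∣ q.choose 2 ∧
      ∀ w : G, w ^ q = 1 → w ∈ Subgroup.center G := by
    rcases hp.eq_two_or_odd' with rfl | hodd
    · refine ⟨4, by norm_num, by decide, fun w hw => ?_⟩
      have h1 : orderOf w ∣ 2 ^ 2 := orderOf_dvd_of_pow_eq_one hw
      obtain ⟨k, hk, hwk⟩ := (Nat.dvd_prime_pow hp).mp h1
      interval_cases k
      · rw [orderOf_eq_one_iff.mp (hwk.trans (pow_zero 2))]
        exact one_mem _
      · exact hP w (by simpa using hwk)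
      · exact h4 rfl w (by simpa using hwk)
    · have h2 : 2 < p := lt_of_le_of_ne hp.two_le fun h => by
        rw [← h] at hodd; exact absurd hodd (by decide)
      refine ⟨p, dvd_rfl, hp.dvd_choose_self two_ne_zero h2, fun w hw => ?_⟩
      rcases (Nat.dvd_prime hp).mp (orderOf_dvd_of_pow_eq_one hw) with h | h
      · rw [orderOf_eq_one_iff.mp h]
        exact one_mem _
      · exact hP w h
  obtain ⟨K, hK⟩ := exists_subgroup_mem_iff_coprime_orderOf (G := G) (p := p)
    fun D hD x hx hxp => Subgroup.mem_centralizer_iff.mpr fun d hd =>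
      (commute_of_isPGroup_of_coprime hpq hpq' hxp
        (fun w hw => Subgroup.mem_center_iff.mp (hq w hw) x) D hD
        (fun u hu => (Subgroup.mem_normalizer_iff.mp hx u).mp hu) d hd).symm.eq
  have hKn : K.Normal := ⟨fun g hg x => (hK _).mpr <| by
    rw [← MulAut.conj_apply, MulEquiv.orderOf_eq]
    exact (hK g).mp hg⟩
  refine ⟨K, hKn, Subgroup.isComplement'_of_disjoint_and_mul_eq_univ ?_ ?_⟩
  · rw [Subgroup.disjoint_def]
    intro x hxK hxS
    obtain ⟨k, hk⟩ := isPGroup_iff_orderOf_dvd_pow.mp S.2 ⟨x, hxS⟩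
    rw [Subgroup.orderOf_mk] at hk
    exact orderOf_eq_one_iff.mp
      (Nat.eq_one_of_dvd_coprimes (((hK x).mp hxK).pow_left k) hk dvd_rfl)
  · rw [← Subgroup.normal_mul, S.sup_eq_top_of_coprime_mem K fun g => (hK g).mpr,
      Subgroup.coe_top]
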